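/- Let (A, 𝔪, k) be a Gorenstein commutative Noetherian local ring, let M be a finitely generated A-module having reducible complexity, and let t be a natural number. If for every finitely generated A-module N having reducible complexity with cx N = t one has Ext^i_A(N,M) = 0 for all i ≫ 0, then cx M < t. -/

import Mathlib

open CategoryTheory Opposite Filter IsLocalRing

universe u

namespace ComplexityTest

variable (A : Type u) [CommRing A] [IsLocalRing A]

structure MinFreeRes (M : Type u) [AddCommGroup M] [Module A M] : Type u where
  b : ℕ → ℕ
  d : (n : ℕ) → ((Fin (b (n + 1)) → A) →ₗ[A] (Fin (b n) → A))
  aug : (Fin (b 0) → A) →ₗ[A] M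
  aug_surjective : Function.Surjective aug
  exact_zero : Function.Exact (d 0) aug
  exact_succ : ∀ n, Function.Exact (d (n + 1)) (d n)
  minimal : ∀ n x i, d n x i ∈ maximalIdeal A

variable (M : Type u) [AddCommGroup M] [Module A M]

def HasComplexityLE (t : ℕ) : Prop :=
  ∃ (R : MinFreeRes A M) (a : ℝ), ∀ᶠ n : ℕ in atTop, (R.b n : ℝ) ≤ a * (n : ℝ) ^ ((t : ℤ) - 1)

noncomputable def complexity : ℕ∞ :=
  sInf {c : ℕ∞ | ∃ t : ℕ, c = t ∧ HasComplexityLE A M t}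

def HasProjDimLE (t : ℕ) : Prop :=
  ∃ R : MinFreeRes A M, ∀ i, t < i → R.b i = 0

noncomputable def projDim : ℕ∞ :=
  sInf {c : ℕ∞ | ∃ t : ℕ, c = t ∧ HasProjDimLE A M t}

def HasFiniteProjDim : Prop :=
  ∃ t : ℕ, HasProjDimLE A M t

def IsSyzygyOf (S : Type u) [AddCommGroup S] [Module A S] : ℕ → Prop
  | 0 => Nonempty (S ≃ₗ[A] M)
  | 1 => ∃ R : MinFreeRes A M, Nonempty (S ≃ₗ[A] (LinearMap.ker R.aug))
  | (n + 2) => ∃ R : MinFreeRes A M, Nonempty (S ≃ₗ[A] (LinearMap.ker (R.d n)))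

variable {A M} in
def IsSES {K S : Type u} [AddCommGroup K] [Module A K] [AddCommGroup S] [Module A S]
    (f : M →ₗ[A] K) (g : K →ₗ[A] S) : Prop :=
  Function.Injective f ∧ Function.Exact f g ∧ Function.Surjective g

noncomputable def extModule (n : ℕ) (N : Type u) [AddCommGroup N] [Module A N] :
    ModuleCat A :=
  ((_root_.Ext A (ModuleCat.{u} A) n).obj (op (ModuleCat.of A M))).obj (ModuleCat.of A N)

def extVanish (n : ℕ) (N : Type u) [AddCommGroup N] [Module A N] : Prop :=
  Subsingleton (extModule A M n N)

/-- The `n`-th Tor module `Tor^A_n(M, N)`. -/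
noncomputable def torModule (n : ℕ) (N : Type u) [AddCommGroup N] [Module A N] :
    ModuleCat A :=
  ((Tor (ModuleCat.{u} A) n).obj (ModuleCat.of A M)).obj (ModuleCat.of A N)

/-- The vanishing `Tor^A_n(M, N) = 0`. -/
def torVanish (n : ℕ) (N : Type u) [AddCommGroup N] [Module A N] : Prop :=
  Subsingleton (torModule A M n N)

noncomputable def depth : ℕ∞ :=
  sInf {c : ℕ∞ | ∃ i : ℕ, c = i ∧ ¬ extVanish A (ResidueField A) i M}

variable {A}

/-- The category of modules of *free reducible complexity* over the local ring `A`.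
It is defined inductively: every finitely generated module of finite projective
dimension has free reducible complexity, and a finitely generated module `M` of finite
positive complexity has free reducible complexity provided there is a short exact
sequence `0 → M → K → Ω^n_A(M) → 0` (necessarily induced by a cohomology element
`η ∈ Ext^{n+1}_A(M,M)`) where `K` is a finitely generated module of free reducible
complexity with `cx K = cx M - 1`. -/
inductive HasFreeRedCxCat : ModuleCat.{u} A → Prop
  | of_finite_projDim (M : ModuleCat.{u} A) (hfg : Module.Finite A M)
      (h : HasFiniteProjDim A M) : HasFreeRedCxCat M
  | step (M K S : ModuleCat.{u} A) (n : ℕ)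
      (hfg : Module.Finite A M) (hKfg : Module.Finite A K)
      (hpos : 0 < complexity A M) (hfin : complexity A M ≠ ⊤)
      (hsyz : IsSyzygyOf A M S n)
      (f : M →ₗ[A] K) (g : K →ₗ[A] S) (hses : IsSES f g)
      (hcx : complexity A K = complexity A M - 1)
      (hK : HasFreeRedCxCat K) : HasFreeRedCxCat M

/-- The category of modules of *reducible complexity* over the local ring `A`: as for
free reducible complexity, but where in addition the reductions are required to
preserve depth. -/
inductive HasRedCxCat : ModuleCat.{u} A → Prop
  | of_finite_projDim (M : ModuleCat.{u} A) (hfg : Module.Finite A M)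
      (h : HasFiniteProjDim A M) : HasRedCxCat M
  | step (M K S : ModuleCat.{u} A) (n : ℕ)
      (hfg : Module.Finite A M) (hKfg : Module.Finite A K)
      (hpos : 0 < complexity A M) (hfin : complexity A M ≠ ⊤)
      (hsyz : IsSyzygyOf A M S n)
      (f : M →ₗ[A] K) (g : K →ₗ[A] S) (hses : IsSES f g)
      (hcx : complexity A K = complexity A M - 1)
      (hdepth : depth A K = depth A M)
      (hK : HasRedCxCat K) : HasRedCxCat M

variable (A)

/-- `M` has free reducible complexity. -/
def HasFreeRedCx (M : Type u) [AddCommGroup M] [Module A M] : Prop :=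
  HasFreeRedCxCat (ModuleCat.of A M)

/-- `M` has reducible complexity. -/
def HasRedCx (M : Type u) [AddCommGroup M] [Module A M] : Prop :=
  HasRedCxCat (ModuleCat.of A M)

/-- A Noetherian local ring is Gorenstein if it has finite injective dimension over
itself; by Bass' characterization, this is equivalent to the vanishing of
`Ext^i_A(k, A)` for all sufficiently large `i`. -/
def IsGorenstein : Prop :=
  ∃ n : ℕ, ∀ i : ℕ, n < i → extVanish A (ResidueField A) i A

end ComplexityTest

open ComplexityTest

/-!
Suppose `t ≤ cx M`. Reducing `M` one complexity at a time ends in a module `N` of reducible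
complexity with `cx N = t`, through short exact sequences `0 → M → K → Ωⁿ(M) → 0`. Over a Gorenstein
ring `Ext^i(N, A) = 0` for `i ≫ 0`: this holds for `k` in place of `N`, passes to the quotients
`A ⧸ p` by Noetherian induction and Nakayama's lemma, and hence to all finite modules by prime
filtrations. So the vanishing of `Ext^i(N, M)` for `i ≫ 0` passes to the syzygies of `M`, and along
the reductions to `Ext^i(N, N)`.

Now let `0 → N → K → Ωⁿ(N) → 0` be a reduction of `N`, and let `θ ∈ Ext^{n+1}(N, N)` be the Yoneda
product of its class with the canonical class in `Extⁿ(N, Ωⁿ(N))`. Some power `θ ^ m` vanishes,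
while the kernel of multiplication by `θ` on `Ext^i(N, k)` has length at most `β_i(K)`. Hence
`β_i(N) ≤ ∑_{j < m} β_{i + j (n + 1)}(K)`, so `cx N ≤ cx K = cx N - 1`, which is impossible since
`0 < cx N < ∞`.
-/

universe v w

namespace ComplexityTest

section Abelian

variable {C : Type v} [Category.{u} C] [Abelian C] [HasExt.{w} C] {X Y Z : C} {n : ℕ}

lemma subsingleton_ext_of_iso_left (e : X ≅ Y) (h : Subsingleton (Abelian.Ext Y Z n)) :
    Subsingleton (Abelian.Ext X Z n) :=
  (((Abelian.extFunctor n).mapIso e.op).app Z).addCommGroupIsoToAddEquiv.subsingleton_congr.1 h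

lemma subsingleton_ext_of_iso_right (e : X ≅ Y) (h : Subsingleton (Abelian.Ext Z Y n)) :
    Subsingleton (Abelian.Ext Z X n) :=
  ((Abelian.extFunctorObj Z n).mapIso e).addCommGroupIsoToAddEquiv.subsingleton_congr.2 h

variable {S : ShortComplex C}

lemma subsingleton_ext_X₂_left (hS : S.ShortExact) (h₁ : Subsingleton (Abelian.Ext S.X₁ Y n))
    (h₃ : Subsingleton (Abelian.Ext S.X₃ Y n)) : Subsingleton (Abelian.Ext S.X₂ Y n) := by
  refine subsingleton_of_forall_eq 0 fun x => ?_
  obtain ⟨z, rfl⟩ := Abelian.Ext.contravariant_sequence_exact₂ hS Y x (h₁.elim _ _)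
  rw [h₃.elim z 0, Abelian.Ext.comp_zero]

lemma subsingleton_ext_X₂_right (hS : S.ShortExact) (h₁ : Subsingleton (Abelian.Ext X S.X₁ n))
    (h₃ : Subsingleton (Abelian.Ext X S.X₃ n)) : Subsingleton (Abelian.Ext X S.X₂ n) := by
  refine subsingleton_of_forall_eq 0 fun x => ?_
  obtain ⟨z, rfl⟩ := Abelian.Ext.covariant_sequence_exact₂ X hS x (h₃.elim _ _)
  rw [h₁.elim z 0, Abelian.Ext.zero_comp]

lemma subsingleton_ext_succ_X₁_right (hS : S.ShortExact)
    (h₂ : Subsingleton (Abelian.Ext X S.X₂ (n + 1))) (h₃ : Subsingleton (Abelian.Ext X S.X₃ n)) :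
    Subsingleton (Abelian.Ext X S.X₁ (n + 1)) := by
  refine subsingleton_of_forall_eq 0 fun x => ?_
  obtain ⟨z, rfl⟩ := Abelian.Ext.covariant_sequence_exact₁ X hS x (h₂.elim _ _) rfl
  rw [h₃.elim z 0, Abelian.Ext.zero_comp]

/-- `Ext^i(X, Y) = 0` for `i ≫ 0`, phrased with Mathlib's derived-category `Ext`, which carries
the Yoneda product; see `eventually_extVanish_iff` for the comparison with `extVanish`. -/
def EventuallyExtVanish (X Y : C) : Prop :=
  ∀ᶠ i in atTop, Subsingleton (Abelian.Ext X Y i)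

lemma EventuallyExtVanish.of_iso_right (h : EventuallyExtVanish Z Y) (e : X ≅ Y) :
    EventuallyExtVanish Z X :=
  h.mono fun _ => subsingleton_ext_of_iso_right e

lemma EventuallyExtVanish.X₂_right (hS : S.ShortExact) (h₁ : EventuallyExtVanish X S.X₁)
    (h₃ : EventuallyExtVanish X S.X₃) : EventuallyExtVanish X S.X₂ := by
  filter_upwards [h₁, h₃] with i hi₁ hi₃ using subsingleton_ext_X₂_right hS hi₁ hi₃

lemma EventuallyExtVanish.X₁_right (hS : S.ShortExact) (h₂ : EventuallyExtVanish X S.X₂)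
    (h₃ : EventuallyExtVanish X S.X₃) : EventuallyExtVanish X S.X₁ := by
  obtain ⟨m, hm⟩ := eventually_atTop.1 (h₂.and h₃)
  filter_upwards [eventually_gt_atTop m] with i hi
  obtain ⟨j, rfl⟩ := Nat.exists_eq_add_one_of_ne_zero (m.zero_le.trans_lt hi).ne'
  exact subsingleton_ext_succ_X₁_right hS (hm _ hi.le).1 (hm j (Nat.lt_succ_iff.1 hi)).2

/-- The powers `θ ^ m ∈ Ext^{s m}(X, X)` of a class `θ ∈ Ext^s(X, X)` for the Yoneda product.
The degree is written `s * m` so that `s * (m + 1)` unfolds to `s * m + s`. -/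
noncomputable def extPow {s : ℕ} (θ : Abelian.Ext X X s) : ∀ m : ℕ, Abelian.Ext X X (s * m)
  | 0 => Abelian.Ext.mk₀ (𝟙 X)
  | m + 1 => (extPow θ m).comp θ rfl

end Abelian

section Length

variable {R : Type*} [CommRing R]

lemma length_le_length_ker_add {P Q : Type*} [AddCommGroup P] [Module R P] [AddCommGroup Q]
    [Module R Q] (u : P →ₗ[R] Q) :
    Module.length R P ≤ Module.length R (LinearMap.ker u) + Module.length R Q := by
  rw [Module.length_eq_add_of_exact (LinearMap.ker u).subtype u.rangeRestrict
    (Submodule.subtype_injective _) u.surjective_rangeRestrict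
    (by rw [LinearMap.exact_iff, LinearMap.ker_rangeRestrict, Submodule.range_subtype])]
  gcongr
  exact Module.length_le_of_injective (LinearMap.range u).subtype (Submodule.subtype_injective _)

lemma length_ker_comp_le {P Q T : Type*} [AddCommGroup P] [Module R P] [AddCommGroup Q]
    [Module R Q] [AddCommGroup T] [Module R T] (f : P →ₗ[R] Q) (g : Q →ₗ[R] T) :
    Module.length R (LinearMap.ker (g ∘ₗ f)) ≤
      Module.length R (LinearMap.ker f) + Module.length R (LinearMap.ker g) := by
  let u : LinearMap.ker (g ∘ₗ f) →ₗ[R] LinearMap.ker g := f.restrict fun _ hx => hx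
  let v : LinearMap.ker u →ₗ[R] LinearMap.ker f :=
    ((LinearMap.ker (g ∘ₗ f)).subtype ∘ₗ (LinearMap.ker u).subtype).codRestrict _
      fun x => congrArg Subtype.val x.2
  have hv : Function.Injective v := fun x y h =>
    Subtype.ext (Subtype.ext (congrArg (fun z : LinearMap.ker f => (z : P)) h))
  calc Module.length R (LinearMap.ker (g ∘ₗ f))
      ≤ Module.length R (LinearMap.ker u) + Module.length R (LinearMap.ker g) :=
        length_le_length_ker_add u
    _ ≤ _ := by gcongr; exact Module.length_le_of_injective v hv

variable {C : Type v} [Category.{u} C] [Abelian C] [HasExt.{w} C] [Linear R C] {X : C} {s : ℕ}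

lemma ker_precomp_extClass {S : ShortComplex C} (hS : S.ShortExact) (Y : C) {i l : ℕ}
    (h : 1 + i = l) :
    LinearMap.ker (hS.extClass.precompOfLinear R Y h) =
      LinearMap.range ((Abelian.Ext.mk₀ S.f).precompOfLinear R Y (zero_add i)) := by
  refine le_antisymm (fun x hx => Abelian.Ext.contravariant_sequence_exact₁ hS Y x h hx) ?_
  rintro _ ⟨z, rfl⟩
  exact hS.extClass_comp_assoc z (h := h)

lemma length_ker_precomp_extClass_le {S : ShortComplex C} (hS : S.ShortExact) (Y : C) {i l : ℕ}
    (h : 1 + i = l) :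
    Module.length R (LinearMap.ker (hS.extClass.precompOfLinear R Y h)) ≤
      Module.length R (Abelian.Ext S.X₂ Y i) := by
  rw [ker_precomp_extClass]
  exact Module.length_le_of_surjective _ (LinearMap.surjective_rangeRestrict _)

lemma length_ker_precomp_extPow_le {θ : Abelian.Ext X X s} {Y : C} {c : ℕ → ℕ∞}
    (hθ : ∀ i, Module.length R
      (LinearMap.ker (θ.precompOfLinear R Y (rfl : s + i = s + i))) ≤ c i)
    (m : ℕ) {i l : ℕ} (h : s * m + i = l) :
    Module.length R (LinearMap.ker ((extPow θ m).precompOfLinear R Y h)) ≤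
      ∑ j ∈ Finset.range m, c (i + j * s) := by
  induction m generalizing i with
  | zero =>
    obtain rfl : i = l := by lia
    have ker_eq_bot : LinearMap.ker ((extPow θ 0).precompOfLinear R Y h) = ⊥ := by
      rw [LinearMap.ker_eq_bot']
      intro x hx
      exact (Abelian.Ext.mk₀_id_comp x).symm.trans hx
    rw [ker_eq_bot, Module.length_bot]
    exact zero_le
  | succ m ih =>
    have hdeg : s * m + (s + i) = l := by lia
    have precomp_eq : (extPow θ (m + 1)).precompOfLinear R Y h =
        (extPow θ m).precompOfLinear R Y hdeg ∘ₗ θ.precompOfLinear R Y rfl :=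
      LinearMap.ext fun x => Abelian.Ext.comp_assoc _ _ _ _ rfl (by lia)
    calc Module.length R (LinearMap.ker ((extPow θ (m + 1)).precompOfLinear R Y h))
        ≤ Module.length R (LinearMap.ker (θ.precompOfLinear R Y rfl)) +
            Module.length R (LinearMap.ker ((extPow θ m).precompOfLinear R Y hdeg)) := by
          rw [precomp_eq]
          exact length_ker_comp_le _ _
      _ ≤ c i + ∑ j ∈ Finset.range m, c (s + i + j * s) := add_le_add (hθ i) (ih hdeg)
      _ = ∑ j ∈ Finset.range (m + 1), c (i + j * s) := by
          rw [Finset.sum_range_succ', zero_mul, add_zero, add_comm]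
          congr! 3
          ring

lemma length_ext_le_sum_of_extPow_eq_zero {θ : Abelian.Ext X X s} {Y : C} {c : ℕ → ℕ∞}
    (hθ : ∀ i, Module.length R
      (LinearMap.ker (θ.precompOfLinear R Y (rfl : s + i = s + i))) ≤ c i)
    {m : ℕ} (h : extPow θ m = 0) (i : ℕ) :
    Module.length R (Abelian.Ext X Y i) ≤ ∑ j ∈ Finset.range m, c (i + j * s) := by
  have ker_eq_top : LinearMap.ker ((extPow θ m).precompOfLinear R Y (rfl : s * m + i = _)) = ⊤ := by
    rw [h, LinearMap.ker_eq_top]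
    ext x
    exact Abelian.Ext.zero_comp (X := X) (n := s * m) x _ rfl
  rw [← Module.length_top (R := R), ← ker_eq_top]
  exact length_ker_precomp_extPow_le hθ m rfl

end Length

section ModuleCat

variable {A : Type u} [CommRing A]

lemma subsingleton_ext_pi {X : ModuleCat.{u} A} {n : ℕ} {Y : Type u} [AddCommGroup Y] [Module A Y]
    [Subsingleton (Abelian.Ext X (ModuleCat.of A Y) n)] (ι : Type) [Finite ι] :
    Subsingleton (Abelian.Ext X (ModuleCat.of A (ι → Y)) n) := by
  have := Fintype.ofFinite ι
  exact subsingleton_ext_of_iso_right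
    (ModuleCat.biproductIsoPi fun _ : ι => ModuleCat.of A Y).symm
    ((Abelian.Ext.addEquivBiproduct X (Limits.biproduct.isBilimit _) n).subsingleton_congr.2
      inferInstance)

lemma extVanish_iff {X Y : Type u} [AddCommGroup X] [Module A X] [AddCommGroup Y] [Module A Y]
    {n : ℕ} (hn : n ≠ 0) :
    extVanish A X n Y ↔ Subsingleton (Abelian.Ext (ModuleCat.of A X) (ModuleCat.of A Y) n) := by
  obtain ⟨n, rfl⟩ := Nat.exists_eq_succ_of_ne_zero hn
  let P := projectiveResolution (ModuleCat.of A X)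
  have e := P.isoExt (R := A) (n + 1) (ModuleCat.of A Y)
  rw [extVanish, extModule, ← ModuleCat.isZero_iff_subsingleton, e.isZero_iff,
    ← HomologicalComplex.exactAt_iff_isZero_homology,
    HomologicalComplex.exactAt_iff' _ n (n + 1) (n + 2) (by simp) (by simp),
    ShortComplex.moduleCat_exact_iff]
  constructor
  · intro cocycle_eq_coboundary
    refine subsingleton_of_forall_eq 0 fun α => ?_
    obtain ⟨f, hf, rfl⟩ := P.extMk_surjective α (n + 2) rfl
    rw [P.extMk_eq_zero_iff f _ rfl hf n rfl]
    exact cocycle_eq_coboundary f hf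
  · intro _ f hf
    exact (P.extMk_eq_zero_iff f (n + 2) rfl hf n rfl).1 (Subsingleton.elim _ _)

lemma eventually_extVanish_iff {X Y : Type u} [AddCommGroup X] [Module A X] [AddCommGroup Y]
    [Module A Y] : (∀ᶠ i in atTop, extVanish A X i Y) ↔
      EventuallyExtVanish (ModuleCat.of A X) (ModuleCat.of A Y) :=
  eventually_congr ((eventually_ne_atTop 0).mono fun _ => extVanish_iff)

lemma IsSES.shortExact {X Y Z : Type u} [AddCommGroup X] [Module A X] [AddCommGroup Y] [Module A Y]
    [AddCommGroup Z] [Module A Z] {f : X →ₗ[A] Y} {g : Y →ₗ[A] Z} (h : IsSES f g) :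
    (ModuleCat.shortComplexOfCompEqZero f g h.2.1.linearMap_comp_eq_zero).ShortExact :=
  ModuleCat.shortComplex_shortExact _ h.2.1 h.1 h.2.2

end ModuleCat

section Noetherian

variable {A : Type u} [CommRing A] [IsNoetherianRing A]

lemma subsingleton_ext_of_forall_prime {Y : ModuleCat.{u} A} {n : ℕ} {I : Ideal A}
    (h : ∀ p : Ideal A, p.IsPrime → I ≤ p →
      Subsingleton (Abelian.Ext (ModuleCat.of A (A ⧸ p)) Y n))
    (X : Type u) [AddCommGroup X] [Module A X] [hX : Module.Finite A X]
    (hI : I ≤ Module.annihilator A X) : Subsingleton (Abelian.Ext (ModuleCat.of A X) Y n) := by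
  induction hX using IsNoetherianRing.induction_on_isQuotientEquivQuotientPrime with
  | subsingleton N =>
    have hN : Limits.IsZero (ModuleCat.of A N) := ModuleCat.isZero_of_subsingleton _
    have := hN.hasProjectiveDimensionLT_zero
    exact HasProjectiveDimensionLT.subsingleton (ModuleCat.of A N) 0 n n.zero_le Y
  | quotient N p e =>
    rw [e.annihilator_eq, Ideal.annihilator_quotient] at hI
    exact subsingleton_ext_of_iso_left e.toModuleIso (h p.1 p.2 hI)
  | exact N₁ N₂ N₃ f g hf hg hfg h₁ h₃ =>
    have hses : IsSES f g := ⟨hf, hfg, hg⟩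
    exact subsingleton_ext_X₂_left hses.shortExact
      (h₁ (hI.trans (f.annihilator_le_of_injective hf)))
      (h₃ (hI.trans (g.annihilator_le_of_surjective hg)))

variable [IsLocalRing A]

lemma subsingleton_ext_of_quotSMulTop {X Y : ModuleCat.{u} A} [Module.Finite A X]
    [Module.Finite A Y] {x : A} (hx : x ∈ maximalIdeal A) (reg : IsSMulRegular X x) {n : ℕ}
    (h : Subsingleton (Abelian.Ext (ModuleCat.of A (QuotSMulTop x X)) Y (n + 1))) :
    Subsingleton (Abelian.Ext X Y n) := by
  have smul_surjective (y : Abelian.Ext X Y n) : ∃ z, x • z = y := by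
    obtain ⟨z : Abelian.Ext X Y n, hz⟩ := Abelian.Ext.contravariant_sequence_exact₁
      reg.smulShortComplex_shortExact Y y (add_comm 1 n) (h.elim _ _)
    refine ⟨z, ?_⟩
    calc x • z = (Abelian.Ext.mk₀ (x • 𝟙 X)).comp z (zero_add n) := by
          rw [Abelian.Ext.mk₀_smul, Abelian.Ext.smul_comp, Abelian.Ext.mk₀_id_comp]
      _ = y := hz
  by_contra! hnontrivial
  refine Submodule.top_ne_pointwise_smul_of_mem_jacobson_annihilator
    (maximalIdeal_le_jacobson (Module.annihilator A (Abelian.Ext X Y n)) hx) (Eq.symm ?_)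
  refine eq_top_iff.2 fun y _ => ?_
  obtain ⟨z, rfl⟩ := smul_surjective y
  exact Submodule.smul_mem_pointwise_smul z x ⊤ trivial

lemma subsingleton_ext_quotient_prime {Y : ModuleCat.{u} A} [Module.Finite A Y] {n : ℕ}
    (hk : ∀ i > n, Subsingleton (Abelian.Ext (ModuleCat.of A (ResidueField A)) Y i))
    (p : Ideal A) (hp : p.IsPrime) :
    ∀ i > n, Subsingleton (Abelian.Ext (ModuleCat.of A (A ⧸ p)) Y i) := by
  induction p using IsNoetherian.induction with
  | hgt p ih =>
  intro i hi
  obtain rfl | hlt := (le_maximalIdeal hp.ne_top).eq_or_lt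
  · exact hk i hi
  obtain ⟨x, hxm, hxp⟩ := SetLike.exists_of_lt hlt
  have reg : IsSMulRegular (A ⧸ p) x := by
    refine isSMulRegular_iff_right_eq_zero_of_smul.2 fun y hy => ?_
    obtain ⟨y, rfl⟩ := Ideal.Quotient.mk_surjective y
    have hxy : Ideal.Quotient.mk p (x * y) = 0 := hy
    rw [Ideal.Quotient.eq_zero_iff_mem] at hxy ⊢
    exact (hp.mem_or_mem hxy).resolve_left hxp
  have hann : p ⊔ Ideal.span {x} ≤ Module.annihilator A (QuotSMulTop x (A ⧸ p)) := by
    refine sup_le ?_ ((Ideal.span_singleton_le_iff_mem _).2 ?_)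
    · calc p = Module.annihilator A (A ⧸ p) := Ideal.annihilator_quotient.symm
        _ ≤ _ := LinearMap.annihilator_le_of_surjective _ (Submodule.mkQ_surjective _)
    · exact QuotSMulTop.mem_annihilator _ x
  have : Module.Finite A (ModuleCat.of A (A ⧸ p)) := inferInstanceAs (Module.Finite A (A ⧸ p))
  refine subsingleton_ext_of_quotSMulTop (X := ModuleCat.of A (A ⧸ p)) hxm reg
    (subsingleton_ext_of_forall_prime (fun q hq hle => ih q ?_ hq (i + 1) (by lia)) _ hann)
  exact SetLike.lt_iff_le_and_exists.2
    ⟨le_sup_left.trans hle, x, hle (Ideal.mem_sup_right (Ideal.mem_span_singleton_self x)), hxp⟩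

lemma subsingleton_ext_of_residueField {Y : ModuleCat.{u} A} [Module.Finite A Y] {n : ℕ}
    (hk : ∀ i > n, Subsingleton (Abelian.Ext (ModuleCat.of A (ResidueField A)) Y i))
    (X : Type u) [AddCommGroup X] [Module A X] [Module.Finite A X] {i : ℕ} (hi : n < i) :
    Subsingleton (Abelian.Ext (ModuleCat.of A X) Y i) :=
  subsingleton_ext_of_forall_prime (fun p hp _ => subsingleton_ext_quotient_prime hk p hp i hi) X
    bot_le

lemma IsGorenstein.eventually_extVanish (hA : IsGorenstein A) (X : Type u) [AddCommGroup X]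
    [Module A X] [Module.Finite A X] : ∀ᶠ i in atTop, extVanish A X i A := by
  obtain ⟨n, hn⟩ := hA
  have : Module.Finite A (ModuleCat.of A A) := inferInstanceAs (Module.Finite A A)
  filter_upwards [eventually_gt_atTop n] with i hi
  exact (extVanish_iff (by lia)).2 <| subsingleton_ext_of_residueField
    (fun j hj => (extVanish_iff (by lia)).1 (hn j hj)) X hi

end Noetherian

section MinimalResolutions

variable {A : Type u} [CommRing A] [IsLocalRing A] {M S : Type u} [AddCommGroup M] [Module A M]
  [AddCommGroup S] [Module A S]

namespace MinFreeRes

/-- The truncation `⋯ → F₂ → F₁ → Ω¹(M) → 0` of a minimal free resolution `⋯ → F₁ → F₀ → M → 0`,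
as a minimal free resolution of the first syzygy `Ω¹(M) = ker (F₀ → M)`. -/
def shift (R : MinFreeRes A M) : MinFreeRes A (LinearMap.ker R.aug) where
  b n := R.b (n + 1)
  d n := R.d (n + 1)
  aug := (R.d 0).codRestrict (LinearMap.ker R.aug) R.exact_zero.apply_apply_eq_zero
  aug_surjective := by
    rintro ⟨y, hy⟩
    obtain ⟨x, rfl⟩ := (R.exact_zero y).1 hy
    exact ⟨x, rfl⟩
  exact_zero x := by
    rw [← R.exact_succ 0 x]
    exact Subtype.ext_iff
  exact_succ n := R.exact_succ (n + 1)
  minimal n := R.minimal (n + 1)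

lemma shortExact (R : MinFreeRes A M) : R.aug.shortComplexKer.ShortExact :=
  LinearMap.shortExact_shortComplexKer R.aug_surjective

instance projective_shortComplexKer_X₂ (R : MinFreeRes A M) :
    Projective R.aug.shortComplexKer.X₂ :=
  (IsProjective.iff_projective (R := A) (Fin (R.b 0) → A)).1 inferInstance

end MinFreeRes

lemma IsSyzygyOf.exists_minFreeRes {n : ℕ} (h : IsSyzygyOf A M S (n + 1)) :
    ∃ R : MinFreeRes A M, IsSyzygyOf A (LinearMap.ker R.aug) S n := by
  match n, h with
  | 0, ⟨R, h⟩ => exact ⟨R, h⟩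
  | 1, ⟨R, ⟨e⟩⟩ =>
    have ker_shift_aug : LinearMap.ker R.shift.aug = LinearMap.ker (R.d 0) :=
      LinearMap.ker_codRestrict _ _ _
    exact ⟨R, R.shift, ⟨e.trans (LinearEquiv.ofEq _ _ ker_shift_aug.symm)⟩⟩
  | n + 2, ⟨R, h⟩ => exact ⟨R, R.shift, h⟩

lemma IsSyzygyOf.eventuallyExtVanish {n : ℕ} (h : IsSyzygyOf A M S n) {X : ModuleCat.{u} A}
    (hA : EventuallyExtVanish X (ModuleCat.of A A))
    (hM : EventuallyExtVanish X (ModuleCat.of A M)) :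
    EventuallyExtVanish X (ModuleCat.of A S) := by
  induction n generalizing M with
  | zero =>
    obtain ⟨e⟩ := h
    exact hM.of_iso_right e.toModuleIso
  | succ n ih =>
    obtain ⟨R, hR⟩ := h.exists_minFreeRes
    have hF : EventuallyExtVanish X R.aug.shortComplexKer.X₂ :=
      hA.mono fun _ _ => subsingleton_ext_pi _
    exact ih hR (.X₁_right R.shortExact hF hM)

lemma MinFreeRes.precomp_extClass_injective (R : MinFreeRes A M) (Y : ModuleCat.{u} A) {i l : ℕ}
    (h : 1 + (i + 1) = l) :
    Function.Injective (R.shortExact.extClass.precompOfLinear A Y h) := by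
  have := Abelian.Ext.subsingleton_of_projective R.aug.shortComplexKer.X₂ Y i
  rw [← LinearMap.ker_eq_bot, ker_precomp_extClass, LinearMap.range_eq_bot]
  exact Subsingleton.elim _ _

lemma IsSyzygyOf.exists_precomp_injective {n : ℕ} (h : IsSyzygyOf A M S n) :
    ∃ σ : Abelian.Ext (ModuleCat.of A M) (ModuleCat.of A S) n,
      ∀ (Y : ModuleCat.{u} A) {i l : ℕ} (hl : n + (i + 1) = l),
        Function.Injective (σ.precompOfLinear A Y hl) := by
  induction n generalizing M with
  | zero =>
    obtain ⟨e⟩ := h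
    refine ⟨Abelian.Ext.mk₀ e.toModuleIso.inv, fun Y i l hl => ?_⟩
    obtain rfl : i + 1 = l := by lia
    refine Function.LeftInverse.injective
      (g := (Abelian.Ext.mk₀ e.toModuleIso.hom).precompOfLinear A Y (zero_add _)) fun x => ?_
    change (Abelian.Ext.mk₀ e.toModuleIso.hom).comp
      ((Abelian.Ext.mk₀ e.toModuleIso.inv).comp x (zero_add _)) (zero_add _) = x
    rw [Abelian.Ext.mk₀_comp_mk₀_assoc, Iso.hom_inv_id, Abelian.Ext.mk₀_id_comp]
  | succ n ih =>
    obtain ⟨R, hR⟩ := h.exists_minFreeRes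
    obtain ⟨σ, hσ⟩ := ih hR
    refine ⟨R.shortExact.extClass.comp σ (add_comm 1 n), fun Y i l hl => ?_⟩
    have hl' : 1 + (n + i + 1) = l := by lia
    have precomp_eq : (R.shortExact.extClass.comp σ (add_comm 1 n)).precompOfLinear A Y hl =
        R.shortExact.extClass.precompOfLinear A Y hl' ∘ₗ σ.precompOfLinear A Y rfl :=
      LinearMap.ext fun x => Abelian.Ext.comp_assoc _ _ _ _ rfl (by lia)
    rw [precomp_eq]
    exact (R.precomp_extClass_injective Y hl').comp (hσ Y rfl)

lemma IsSyzygyOf.exists_length_ker_precomp_le {K : Type u} [AddCommGroup K] [Module A K]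
    {n : ℕ} (h : IsSyzygyOf A M S n) {f : M →ₗ[A] K} {g : K →ₗ[A] S} (hses : IsSES f g) :
    ∃ θ : Abelian.Ext (ModuleCat.of A M) (ModuleCat.of A M) (n + 1),
      ∀ (Y : ModuleCat.{u} A) {i l : ℕ} (hl : n + 1 + i = l),
        Module.length A (LinearMap.ker (θ.precompOfLinear A Y hl)) ≤
          Module.length A (Abelian.Ext (ModuleCat.of A K) Y i) := by
  obtain ⟨σ, hσ⟩ := h.exists_precomp_injective
  refine ⟨σ.comp hses.shortExact.extClass rfl, fun Y i l hl => ?_⟩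
  have hl' : n + (i + 1) = l := by lia
  have precomp_eq : (σ.comp hses.shortExact.extClass rfl).precompOfLinear A Y hl =
      σ.precompOfLinear A Y hl' ∘ₗ
        hses.shortExact.extClass.precompOfLinear A Y (add_comm 1 i) :=
    LinearMap.ext fun x => Abelian.Ext.comp_assoc _ _ _ _ (add_comm 1 i) (by lia)
  rw [precomp_eq, LinearMap.ker_comp_of_ker_eq_bot _ (LinearMap.ker_eq_bot.2 (hσ Y hl'))]
  exact length_ker_precomp_extClass_le hses.shortExact Y (add_comm 1 i)

end MinimalResolutions

section BettiNumbers

variable {A : Type u} [CommRing A] [IsLocalRing A] {M : Type u} [AddCommGroup M] [Module A M]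

lemma length_residueField : Module.length A (ResidueField A) = 1 :=
  Module.length_eq_one_iff.2 <|
    isSimpleModule_iff_quot_maximal.2 ⟨maximalIdeal A, inferInstance, ⟨LinearEquiv.refl _ _⟩⟩

namespace MinFreeRes

lemma comp_d_eq_zero (R : MinFreeRes A M) {n : ℕ}
    (φ : (Fin (R.b n) → A) →ₗ[A] ResidueField A) : φ ∘ₗ R.d n = 0 := by
  refine LinearMap.ext fun x => ?_
  rw [LinearMap.comp_apply, LinearMap.pi_apply_eq_sum_univ φ]
  refine Finset.sum_eq_zero fun i _ => ?_
  have residue_eq_zero : residue A (R.d n x i) = 0 := (residue_eq_zero_iff _).2 (R.minimal n x i)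
  rw [Algebra.smul_def, ResidueField.algebraMap_eq, residue_eq_zero, zero_mul]

lemma ker_aug_le_ker (R : MinFreeRes A M) (φ : (Fin (R.b 0) → A) →ₗ[A] ResidueField A) :
    LinearMap.ker R.aug ≤ LinearMap.ker φ := by
  rw [R.exact_zero.linearMap_ker_eq]
  exact LinearMap.range_le_ker_iff.2 (R.comp_d_eq_zero φ)

lemma lcomp_aug_bijective (R : MinFreeRes A M) :
    Function.Bijective (LinearMap.lcomp A (ResidueField A) R.aug) := by
  refine ⟨LinearMap.lcomp_injective_of_surjective _ R.aug_surjective, fun φ => ?_⟩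
  exact (LinearMap.exact_lcomp_of_exact_of_surjective _ R.exact_zero R.aug_surjective φ).1
    (R.comp_d_eq_zero φ)

lemma length_ext_residueField_zero (R : MinFreeRes A M) :
    Module.length A (Abelian.Ext (ModuleCat.of A M) (ModuleCat.of A (ResidueField A)) 0) =
      R.b 0 := by
  have e : Abelian.Ext (ModuleCat.of A M) (ModuleCat.of A (ResidueField A)) 0 ≃ₗ[A]
      (Fin (R.b 0) → ResidueField A) :=
    Abelian.Ext.linearEquiv₀ ≪≫ₗ ModuleCat.homLinearEquiv ≪≫ₗ
      LinearEquiv.ofBijective _ R.lcomp_aug_bijective ≪≫ₗ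
      ((Pi.basisFun A (Fin (R.b 0))).constr A).symm
  simp [e.length_eq, length_residueField]

lemma precomp_extClass_residueField_bijective (R : MinFreeRes A M) (i : ℕ) :
    Function.Bijective (R.shortExact.extClass.precompOfLinear A
      (ModuleCat.of A (ResidueField A)) (add_comm 1 i)) := by
  refine ⟨?_, precomp_extClass_surjective_of_projective_X₂ _ R.shortExact i⟩
  cases i with
  | succ i => exact R.precomp_extClass_injective _ _
  | zero =>
    rw [← LinearMap.ker_eq_bot, ker_precomp_extClass, LinearMap.range_eq_bot]
    ext z
    obtain ⟨φ, rfl⟩ := (Abelian.Ext.mk₀_bijective _ _).2 z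
    refine (Abelian.Ext.mk₀_comp_mk₀ _ _).trans ((Abelian.Ext.mk₀_eq_zero_iff _).2 ?_)
    ext y
    exact R.ker_aug_le_ker φ.hom y.2

theorem length_ext_residueField (R : MinFreeRes A M) (i : ℕ) :
    Module.length A (Abelian.Ext (ModuleCat.of A M) (ModuleCat.of A (ResidueField A)) i) =
      R.b i := by
  induction i generalizing M with
  | zero => exact R.length_ext_residueField_zero
  | succ i ih =>
    exact (LinearEquiv.ofBijective _
      (R.precomp_extClass_residueField_bijective i)).length_eq.symm.trans (ih R.shift)

end MinFreeRes

end BettiNumbers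

section Complexity

open Asymptotics

lemma isBigO_natCast_add_zpow (c : ℕ) (e : ℤ) :
    (fun n : ℕ => ((n + c : ℕ) : ℝ) ^ e) =O[atTop] fun n : ℕ => (n : ℝ) ^ e := by
  have hequiv : (fun n : ℕ => ((n + c : ℕ) : ℝ)) ~[atTop] fun n : ℕ => (n : ℝ) := by
    simp only [Nat.cast_add]
    exact IsEquivalent.refl.add_isLittleO (isLittleO_const_left.2 (.inr
      (tendsto_norm_atTop_atTop.comp tendsto_natCast_atTop_atTop)))
  exact (hequiv.zpow e).isBigO

lemma isBigO_of_le_sum_shift {u v : ℕ → ℕ} {m s : ℕ}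
    (h : ∀ i, u i ≤ ∑ j ∈ Finset.range m, v (i + j * s)) {e : ℤ}
    (hv : (fun n => (v n : ℝ)) =O[atTop] fun n : ℕ => (n : ℝ) ^ e) :
    (fun n => (u n : ℝ)) =O[atTop] fun n : ℕ => (n : ℝ) ^ e := by
  have shift_isBigO (j : ℕ) :
      (fun n => (v (n + j * s) : ℝ)) =O[atTop] fun n : ℕ => (n : ℝ) ^ e :=
    (hv.comp_tendsto (tendsto_add_atTop_nat (j * s))).trans (isBigO_natCast_add_zpow _ e)
  refine IsBigO.trans (.of_norm_le fun n => ?_)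
    (IsBigO.sum fun j (_ : j ∈ Finset.range m) => shift_isBigO j)
  rw [Real.norm_natCast, Finset.sum_apply]
  exact_mod_cast h n

variable {A : Type u} [CommRing A] [IsLocalRing A] {M : Type u} [AddCommGroup M] [Module A M]

lemma hasComplexityLE_iff {t : ℕ} : HasComplexityLE A M t ↔ ∃ R : MinFreeRes A M,
    (fun n => (R.b n : ℝ)) =O[atTop] fun n : ℕ => (n : ℝ) ^ ((t : ℤ) - 1) := by
  simp only [HasComplexityLE, isBigO_iff, Real.norm_natCast, norm_zpow]

lemma complexity_eq_zero_of_hasFiniteProjDim (h : HasFiniteProjDim A M) : complexity A M = 0 := by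
  obtain ⟨t, R, hR⟩ := h
  refine le_antisymm (sInf_le ⟨0, rfl, R, 0, ?_⟩) zero_le
  filter_upwards [eventually_gt_atTop t] with n hn
  simp [hR n hn]

lemma nonempty_minFreeRes_of_complexity_ne_top (h : complexity A M ≠ ⊤) :
    Nonempty (MinFreeRes A M) := by
  contrapose! h
  exact sInf_eq_top.2 fun c ⟨_, _, R, _⟩ => h.elim R

lemma complexity_le_of_isSES {K S : Type u} [AddCommGroup K] [Module A K] [AddCommGroup S]
    [Module A S] {n : ℕ} (R : MinFreeRes A M) (hsyz : IsSyzygyOf A M S n) {f : M →ₗ[A] K}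
    {g : K →ₗ[A] S} (hses : IsSES f g)
    (hM : EventuallyExtVanish (ModuleCat.of A M) (ModuleCat.of A M)) :
    complexity A M ≤ complexity A K := by
  obtain ⟨θ, hθ⟩ := hsyz.exists_length_ker_precomp_le hses
  obtain ⟨m, hm⟩ := eventually_atTop.1 hM
  have extPow_eq_zero : extPow θ m = 0 := (hm _ (Nat.le_mul_of_pos_left m n.succ_pos)).elim _ _
  refine sInf_le_sInf fun c ⟨t, hc, hK⟩ => ⟨t, hc, ?_⟩
  obtain ⟨RK, hRK⟩ := hasComplexityLE_iff.1 hK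
  have betti_le (i : ℕ) : R.b i ≤ ∑ j ∈ Finset.range m, RK.b (i + j * (n + 1)) := by
    have length_le := length_ext_le_sum_of_extPow_eq_zero
      (fun i => (hθ (ModuleCat.of A (ResidueField A)) rfl).trans_eq (RK.length_ext_residueField i))
      extPow_eq_zero i
    rw [R.length_ext_residueField] at length_le
    exact_mod_cast length_le
  exact hasComplexityLE_iff.2 ⟨R, isBigO_of_le_sum_shift betti_le hRK⟩

end Complexity

section ReducibleComplexity

variable {A : Type u} [CommRing A] [IsLocalRing A] {M : ModuleCat.{u} A}

lemma HasFreeRedCxCat.complexity_eq_zero (hM : HasFreeRedCxCat M) (h : EventuallyExtVanish M M) :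
    complexity A M = 0 := by
  cases hM with
  | of_finite_projDim _ _ h => exact complexity_eq_zero_of_hasFiniteProjDim h
  | step _ K S n _ _ hpos hfin hsyz f g hses hcx _ =>
    obtain ⟨R⟩ := nonempty_minFreeRes_of_complexity_ne_top hfin
    have hle : complexity A M ≤ complexity A M - 1 :=
      (complexity_le_of_isSES R hsyz hses h).trans_eq hcx
    exact absurd hle ((ENat.addLECancellable_of_ne_top hfin).tsub_lt_self hpos one_pos).not_ge

lemma HasRedCxCat.finite (hM : HasRedCxCat M) : Module.Finite A M := by
  cases hM <;> assumption

lemma HasRedCxCat.hasFreeRedCxCat (hM : HasRedCxCat M) : HasFreeRedCxCat M := by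
  induction hM with
  | of_finite_projDim M hfg h => exact .of_finite_projDim M hfg h
  | step M K S n hfg hKfg hpos hfin hsyz f g hses hcx _ _ ih =>
    exact .step M K S n hfg hKfg hpos hfin hsyz f g hses hcx ih

lemma HasRedCxCat.exists_complexity_eq (hM : HasRedCxCat M) (t : ℕ) (hle : t ≤ complexity A M) :
    ∃ N : ModuleCat.{u} A, HasRedCxCat N ∧ complexity A N = t ∧
      ∀ X, EventuallyExtVanish X (ModuleCat.of A A) → EventuallyExtVanish X M →
        EventuallyExtVanish X N := by
  induction hM with
  | of_finite_projDim M hfg h =>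
    rw [complexity_eq_zero_of_hasFiniteProjDim h] at hle
    refine ⟨M, .of_finite_projDim M hfg h, ?_, fun _ _ hX => hX⟩
    rw [complexity_eq_zero_of_hasFiniteProjDim h, le_antisymm hle zero_le]
  | step M K S n hfg hKfg hpos hfin hsyz f g hses hcx hdepth hK ih =>
    obtain heq | hlt := hle.eq_or_lt
    · exact ⟨M, .step M K S n hfg hKfg hpos hfin hsyz f g hses hcx hdepth hK, heq.symm,
        fun _ _ hX => hX⟩
    · obtain ⟨N, hN, hcN, hX⟩ := ih (hcx ▸ ENat.le_sub_one_of_lt hlt)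
      refine ⟨N, hN, hcN, fun X hXA hXM => hX X hXA ?_⟩
      exact .X₂_right hses.shortExact hXM (hsyz.eventuallyExtVanish hXA hXM)

end ReducibleComplexity

end ComplexityTest

theorem complexity_lt_of_extVanish_into_rc_of_gorenstein_general
    (A : Type u) [CommRing A] [IsLocalRing A] (M : Type u) [AddCommGroup M] [Module A M]
    (hM : HasRedCx A M) (t : ℕ) (ht : 0 < t)
    (hA : ∀ (N : Type u) [AddCommGroup N] [Module A N] [Module.Finite A N],
      HasRedCx A N → complexity A N = t → ∀ᶠ i in atTop, extVanish A N i A)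
    (h : ∀ (N : Type u) [AddCommGroup N] [Module A N] [Module.Finite A N],
      HasRedCx A N → complexity A N = t → ∀ᶠ i in atTop, extVanish A N i M) :
    complexity A M < t := by
  by_contra! hle
  obtain ⟨N, hN, hcN, hX⟩ := hM.exists_complexity_eq t hle
  have := hN.finite
  have hNA := eventually_extVanish_iff.1 (hA N hN hcN)
  have hNM := eventually_extVanish_iff.1 (h N hN hcN)
  have hzero : complexity A N = 0 := hN.hasFreeRedCxCat.complexity_eq_zero (hX N hNA hNM)
  exact ht.ne' (by exact_mod_cast hcN.symm.trans hzero)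

/-- **Corollary 3.5**: let `A` be a Gorenstein local ring, `M` a module of reducible
complexity and `t` a (positive) natural number. If `Ext^i_A(N,M) = 0` for `i ≫ 0` for
every module `N` of reducible complexity with `cx N = t`, then `cx M < t`. -/
theorem complexity_lt_of_extVanish_into_rc_of_gorenstein
    (A : Type u) [CommRing A] [IsLocalRing A] [IsNoetherianRing A]
    (hA : IsGorenstein A)
    (M : Type u) [AddCommGroup M] [Module A M] [Module.Finite A M]
    (hM : HasRedCx A M)
    (t : ℕ) (ht : 0 < t)
    (h : ∀ (N : Type u) [AddCommGroup N] [Module A N] [Module.Finite A N],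
      HasRedCx A N → complexity A N = t →
        ∀ᶠ i in Filter.atTop, extVanish A N i M) :
    complexity A M < (t : ℕ∞) :=
  complexity_lt_of_extVanish_into_rc_of_gorenstein_general A M hM t ht
    (fun N _ _ _ _ _ => hA.eventually_extVanish N) h
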